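/- arXiv:2003.13896 — 14 statements merged into one kernel-verified Lean document; each statement's English description precedes it below -/
import Mathlib

section
/- Let (X, d) be a metric space, B ≥ 0, and g a monotone function from finite subsets of X to ℝ (g(A) ≤ g(A') whenever A ⊆ A'). For a finite sequence P = (v_0, …, v_k) of pairwise distinct points of X, define its cost C(P) = Σ_{j=0}^{k−1} d(v_j, v_{j+1}) and its vertex set V(P) = {v_0, …, v_k}. Suppose P_1, …, P_N are such sequences with pairwise distinct starting points v_{s_1}, …, v_{s_N} and C(P_i) ≤ B for every i. Then there exist sequences P_1', …, P_N' of pairwise distinct points such that P_i' starts at v_{s_i}, C(P_i') ≤ B, the vertex sets V(P_1'), …, V(P_N') are pairwise disjoint, and g(⋃_i V(P_i')) = g(⋃_i V(P_i)). In particular, the multiple-path orienteering problem on a metric graph admits an optimal solution consisting of pairwise non-overlapping paths. -/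
theorem mop_cost_skip {X : Type*} [MetricSpace X] (a b : X) (t : List X) :
    (((a :: t).zip (a :: t).tail).map (fun p => dist p.1 p.2)).sum ≤
      (((a :: b :: t).zip (a :: b :: t).tail).map (fun p => dist p.1 p.2)).sum := by
  cases t with
  | nil => simp
  | cons c t =>
    simp
    linarith [dist_triangle a b c]

theorem mop_cost_filter {X : Type*} [MetricSpace X] (q : X → Bool) (l : List X) : ∀ a : X,
    (((a :: l.filter q).zip (a :: l.filter q).tail).map (fun p => dist p.1 p.2)).sum ≤
      (((a :: l).zip (a :: l).tail).map (fun p => dist p.1 p.2)).sum := by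
  induction l with
  | nil => intro a; simp
  | cons b t ih =>
    intro a
    by_cases hb : q b = true
    · have h := ih b
      rw [List.filter_cons_of_pos hb]
      simp only [List.tail_cons, List.zip_cons_cons, List.map_cons, List.sum_cons] at h ⊢
      linarith
    · rw [List.filter_cons_of_neg hb]
      exact (ih a).trans (mop_cost_skip a b t)

/-- In a metric space, any feasible collection of budgeted paths with
pairwise distinct starting points can be replaced by a feasible collection of pairwise
vertex-disjoint paths with the same starting points and the same team reward. -/
theorem mop_optimal_solution_no_overlap
    {X : Type*} [MetricSpace X] [DecidableEq X]
    (B : ℝ) (hB : 0 ≤ B)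
    (g : Finset X → ℝ)
    (hgmono : ∀ A A' : Finset X, A ⊆ A' → g A ≤ g A')
    (N : ℕ) (vs : Fin N → X) (hvs : Function.Injective vs)
    (P : Fin N → List X)
    (hnodup : ∀ i, (P i).Nodup)
    (hstart : ∀ i, (P i).head? = some (vs i))
    (hcost : ∀ i, (((P i).zip (P i).tail).map (fun p => dist p.1 p.2)).sum ≤ B) :
    ∃ P' : Fin N → List X,
      (∀ i, (P' i).Nodup) ∧
      (∀ i, (P' i).head? = some (vs i)) ∧
      (∀ i, (((P' i).zip (P' i).tail).map (fun p => dist p.1 p.2)).sum ≤ B) ∧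
      (∀ i j, i ≠ j → Disjoint (P' i).toFinset (P' j).toFinset) ∧
      g (Finset.univ.biUnion fun i => (P' i).toFinset) =
        g (Finset.univ.biUnion fun i => (P i).toFinset) := by
  classical
  have hmem : ∀ i, vs i ∈ P i := fun i => List.mem_of_mem_head? (by rw [hstart i]; rfl)
  -- every visited vertex gets an owner; a start vertex is owned by its own path
  have howner : ∀ x : X, ∃ o : Option (Fin N),
      (∀ i, vs i = x → o = some i) ∧ (∀ i, o = some i → x ∈ P i) ∧
      ((∃ i, x ∈ P i) → ∃ i, o = some i) := by
    intro x
    by_cases h : ∃ i, vs i = x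
    · obtain ⟨i, rfl⟩ := h
      refine ⟨some i, fun j hj => by rw [hvs hj], ?_, fun _ => ⟨i, rfl⟩⟩
      intro j hj
      cases hj
      exact hmem i
    · by_cases h2 : ∃ i, x ∈ P i
      · obtain ⟨i, hi⟩ := h2
        refine ⟨some i, fun j hj => absurd ⟨j, hj⟩ h, ?_, fun _ => ⟨i, rfl⟩⟩
        intro j hj
        cases hj
        exact hi
      · exact ⟨none, fun j hj => absurd ⟨j, hj⟩ h, fun j hj => by simp at hj,
          fun h3 => absurd h3 h2⟩
  choose o ho1 ho2 ho3 using howner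
  have hdec : ∀ i, ∃ t, P i = vs i :: t := by
    intro i
    have h := hstart i
    cases hP : P i with
    | nil => simp [hP] at h
    | cons a t =>
      simp [hP] at h
      exact ⟨t, by rw [h]⟩
  have hpos : ∀ i, decide (o (vs i) = some i) = true := fun i => by simp [ho1 (vs i) i rfl]
  refine ⟨fun i => (P i).filter (fun x => decide (o x = some i)), ?_, ?_, ?_, ?_, ?_⟩
  · intro i
    exact (hnodup i).filter _
  · intro i
    obtain ⟨t, ht⟩ := hdec i
    simp only [ht]
    rw [List.filter_cons_of_pos (p := fun x => decide (o x = some i)) (hpos i)]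
    rfl
  · intro i
    refine le_trans ?_ (hcost i)
    obtain ⟨t, ht⟩ := hdec i
    simp only [ht]
    rw [List.filter_cons_of_pos (p := fun x => decide (o x = some i)) (hpos i)]
    exact mop_cost_filter _ t (vs i)
  · intro i j hij
    rw [Finset.disjoint_left]
    intro x hx hx'
    simp only [List.mem_toFinset, List.mem_filter, decide_eq_true_eq] at hx hx'
    exact hij (Option.some.inj (hx.2.symm.trans hx'.2))
  · congr 1
    ext x
    simp only [Finset.mem_biUnion, Finset.mem_univ, true_and, List.mem_toFinset,
      List.mem_filter, decide_eq_true_eq]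
    constructor
    · rintro ⟨i, hi, _⟩
      exact ⟨i, hi⟩
    · intro h
      obtain ⟨i, hi⟩ := ho3 x h
      exact ⟨i, ho2 x i hi, hi⟩
end

section
/- Let V be a finite set and g : 2^V → ℝ normalized, monotone and submodular. Let k_g ∈ [0,1) be a curvature bound for g (g(V) − g(V \ {v}) ≥ (1 − k_g)·g({v}) for all v ∈ V), and let k_f ∈ [0,1) satisfy the disjoint-gain property: g(Y ∪ Z) − g(Z) ≥ (1 − k_f)·g(Y) for all disjoint Y, Z ⊆ V. Let η ≥ 1 and let F_1, …, F_M be families of subsets of V, each closed under taking subsets (if S ∈ F_i and S' ⊆ S then S' ∈ F_i). Set X_0 = ∅, and for i = 1, …, M let P_i ∈ F_i satisfy the η-approximate greedy condition g(X_{i−1} ∪ P_i) − g(X_{i−1}) ≥ (1/η)·(g(X_{i−1} ∪ S) − g(X_{i−1})) for every S ∈ F_i, where X_i = X_{i−1} ∪ P_i. Then for every choice of pairwise disjoint sets Q_1, …, Q_M with Q_i ∈ F_i, g(X_M) ≥ (1/(1−k_g) + η/(1−k_f))^{−1} · g(Q_1 ∪ ⋯ ∪ Q_M). (This is the approximation guarantee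 of sequential greedy assignment for the multiple-path orienteering problem with an η-approximate single-robot orienteering subroutine.) -/
/-- Approximation guarantee of sequential greedy assignment with an
`η`-approximate single-robot orienteering subroutine. -/
theorem sga_approximation_guarantee
    {V : Type*} [Fintype V] [DecidableEq V]
    (g : Finset V → ℝ)
    (hg0 : g ∅ = 0)
    (hgmono : ∀ A B : Finset V, A ⊆ B → g A ≤ g B)
    (hgsub : ∀ A B : Finset V, g A + g B ≥ g (A ∪ B) + g (A ∩ B))
    (kg kf : ℝ) (hkg0 : 0 ≤ kg) (hkg1 : kg < 1) (hkf0 : 0 ≤ kf) (hkf1 : kf < 1)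
    (hcurv : ∀ v : V, g Finset.univ - g (Finset.univ \ {v}) ≥ (1 - kg) * g {v})
    (hdisjgain : ∀ Y Z : Finset V, Disjoint Y Z → g (Y ∪ Z) - g Z ≥ (1 - kf) * g Y)
    (η : ℝ) (hη : 1 ≤ η)
    (M : ℕ) (F : Fin M → Set (Finset V))
    (hFdown : ∀ i : Fin M, ∀ S ∈ F i, ∀ S' : Finset V, S' ⊆ S → S' ∈ F i)
    (P : Fin M → Finset V) (hP : ∀ i, P i ∈ F i)
    (Xs : ℕ → Finset V) (hX0 : Xs 0 = ∅)
    (hXstep : ∀ i : Fin M, Xs ((i : ℕ) + 1) = Xs i ∪ P i)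
    (hgreedy : ∀ i : Fin M, ∀ S ∈ F i,
      g (Xs i ∪ P i) - g (Xs i) ≥ (1 / η) * (g (Xs i ∪ S) - g (Xs i)))
    (Q : Fin M → Finset V) (hQ : ∀ i, Q i ∈ F i)
    (hQdisj : ∀ i j : Fin M, i ≠ j → Disjoint (Q i) (Q j)) :
    g (Xs M) ≥ (1 / (1 / (1 - kg) + η / (1 - kf))) * g (Finset.univ.biUnion Q) := by
  have key : ∀ m : ℕ, m ≤ M → ∀ T : Finset V, Xs m ⊆ T →
      g (T ∪ (Finset.univ.filter (fun i : Fin M => (i : ℕ) < m)).biUnion Q)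
        ≤ g T + η * g (Xs m) := by
    intro m
    induction m with
    | zero =>
      intro _ T _
      simp [hX0, hg0]
    | succ m ih =>
      intro hm T hT
      have hlt : m < M := hm
      have hstep := hXstep ⟨m, hlt⟩
      have hgr := hgreedy ⟨m, hlt⟩ (Q ⟨m, hlt⟩) (hQ _)
      simp only at hstep hgr
      rw [← hstep] at hgr
      have hsub : Xs m ⊆ T := by
        refine Finset.Subset.trans ?_ hT
        rw [hstep]
        exact Finset.subset_union_left
      have h1 := ih hlt.le T hsub
      set A := (Finset.univ.filter (fun i : Fin M => (i : ℕ) < m)).biUnion Q with hA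
      have hsplit : (Finset.univ.filter (fun i : Fin M => (i : ℕ) < m + 1)).biUnion Q
          = A ∪ Q ⟨m, hlt⟩ := by
        have : (Finset.univ.filter (fun i : Fin M => (i : ℕ) < m + 1))
            = insert ⟨m, hlt⟩ (Finset.univ.filter (fun i : Fin M => (i : ℕ) < m)) := by
          ext i
          simp only [Finset.mem_filter, Finset.mem_univ, true_and, Finset.mem_insert, Fin.ext_iff]
          omega
        rw [this, Finset.biUnion_insert, Finset.union_comm]
      rw [hsplit]
      have h2 := hgsub (T ∪ A) (Xs m ∪ Q ⟨m, hlt⟩)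
      have h3 : g (Xs m) ≤ g ((T ∪ A) ∩ (Xs m ∪ Q ⟨m, hlt⟩)) := by
        apply hgmono
        exact Finset.subset_inter (hsub.trans Finset.subset_union_left) Finset.subset_union_left
      have h4 : g (T ∪ (A ∪ Q ⟨m, hlt⟩)) ≤ g ((T ∪ A) ∪ (Xs m ∪ Q ⟨m, hlt⟩)) := by
        apply hgmono
        intro x hx
        simp only [Finset.mem_union] at hx ⊢
        tauto
      have hη0 : 0 < η := by linarith
      have h5 : g (Xs m ∪ Q ⟨m, hlt⟩) - g (Xs m) ≤ η * (g (Xs (m + 1)) - g (Xs m)) := by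
        have h := mul_le_mul_of_nonneg_left hgr hη0.le
        rw [← mul_assoc, mul_one_div_cancel hη0.ne', one_mul] at h
        exact h
      linarith
  have hk := key M le_rfl (Xs M) (Finset.Subset.refl _)
  have hall : (Finset.univ.filter (fun i : Fin M => (i : ℕ) < M)) = Finset.univ := by
    ext i
    simp
  rw [hall] at hk
  have hQX : g (Finset.univ.biUnion Q) ≤ g (Xs M ∪ Finset.univ.biUnion Q) :=
    hgmono _ _ Finset.subset_union_right
  have hX : 0 ≤ g (Xs M) := by
    rw [← hg0]
    exact hgmono _ _ (Finset.empty_subset _)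
  have ha : 1 ≤ 1 / (1 - kg) := by
    rw [le_div_iff₀ (by linarith)]
    linarith
  have hb : η ≤ η / (1 - kf) := by
    rw [le_div_iff₀ (by linarith)]
    nlinarith
  have hc : 0 < 1 / (1 - kg) + η / (1 - kf) := by linarith
  rw [ge_iff_le, one_div_mul_eq_div, div_le_iff₀ hc]
  nlinarith [mul_le_mul_of_nonneg_left (add_le_add ha hb) hX]
end

section
/- Let P be a finite set and F : 2^P → ℝ normalized, monotone and submodular with curvature bound k_f ∈ [0,1) (F(P) − F(P \ {p}) ≥ (1 − k_f)·F({p}) for all p ∈ P). Let 1 ≤ α < N, let S_1, S_2 ⊆ P be disjoint with |S_1| = α and |S_1 ∪ S_2| = N, and suppose F({a}) ≥ F({b}) for every a ∈ S_1 and b ∈ S_2. Suppose further F(S_2) ≥ c·f* for some reals c ≥ 0 and f* ≥ 0. Then for every A ⊆ S_1 ∪ S_2 with |A| ≤ α, F((S_1 ∪ S_2) \ A) ≥ max{1 − k_f, 1/(α+1), 1/(N−α)} · c · f*. In particular, taking c = (1/(1−k_g) + η/(1−k_f))^{−1} and f* the optimal value of the Robust Multiple-path Orienteering Problem yields the approximation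 guarantee of the proposed algorithm. -/
theorem rmop_sub_aux {P : Type*} [DecidableEq P] (F : Finset P → ℝ) (hF0 : F ∅ = 0)
    (hFmono : ∀ A B : Finset P, A ⊆ B → F A ≤ F B)
    (hFsub : ∀ A B : Finset P, F A + F B ≥ F (A ∪ B) + F (A ∩ B)) (X Y : Finset P) :
    F (X ∪ Y) ≤ F X + ∑ y ∈ Y, F {y} := by
  induction Y using Finset.induction_on with
  | empty => simp
  | insert a Y ha ih =>
    rw [Finset.sum_insert ha]
    have h1 := hFsub (X ∪ Y) {a}
    have h2 := hFmono ∅ ((X ∪ Y) ∩ {a}) (Finset.empty_subset _)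
    have h3 : X ∪ insert a Y = (X ∪ Y) ∪ {a} := by ext; simp
    rw [h3]; linarith

theorem rmop_curv_aux {P : Type*} [Fintype P] [DecidableEq P] (F : Finset P → ℝ)
    (hFsub : ∀ A B : Finset P, F A + F B ≥ F (A ∪ B) + F (A ∩ B)) (kf : ℝ)
    (hcurv : ∀ p : P, F Finset.univ - F (Finset.univ \ {p}) ≥ (1 - kf) * F {p})
    (X Y : Finset P) (hd : Disjoint X Y) :
    F X + (1 - kf) * ∑ y ∈ Y, F {y} ≤ F (X ∪ Y) := by
  induction Y using Finset.induction_on with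
  | empty => simp
  | insert a Y ha ih =>
    rw [Finset.disjoint_insert_right] at hd
    have ih := ih hd.2
    rw [Finset.sum_insert ha]
    have h1 := hFsub (X ∪ insert a Y) (Finset.univ \ {a})
    have h3 : (X ∪ insert a Y) ∪ (Finset.univ \ {a}) = Finset.univ := by
      ext x; simp; tauto
    have h4 : (X ∪ insert a Y) ∩ (Finset.univ \ {a}) = X ∪ Y := by
      ext x
      have : x = a → x ∉ X ∧ x ∉ Y := by rintro rfl; exact ⟨hd.1, ha⟩
      simp; tauto
    rw [h3, h4] at h1
    have h5 := hcurv a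
    linarith

/-- Approximation guarantee of the proposed algorithm for RMOP. -/
theorem rmop_algorithm_guarantee
    {P : Type*} [Fintype P] [DecidableEq P]
    (F : Finset P → ℝ)
    (hF0 : F ∅ = 0)
    (hFmono : ∀ A B : Finset P, A ⊆ B → F A ≤ F B)
    (hFsub : ∀ A B : Finset P, F A + F B ≥ F (A ∪ B) + F (A ∩ B))
    (kf : ℝ) (hkf0 : 0 ≤ kf) (hkf1 : kf < 1)
    (hcurv : ∀ p : P, F Finset.univ - F (Finset.univ \ {p}) ≥ (1 - kf) * F {p})
    (α N : ℕ) (hα : 1 ≤ α) (hαN : α < N)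
    (S1 S2 : Finset P) (hdisj : Disjoint S1 S2)
    (hS1card : S1.card = α) (hNcard : (S1 ∪ S2).card = N)
    (hord : ∀ a ∈ S1, ∀ b ∈ S2, F {a} ≥ F {b})
    (c fstar : ℝ) (hc : 0 ≤ c) (hfstar : 0 ≤ fstar)
    (hS2 : F S2 ≥ c * fstar) :
    ∀ A ⊆ S1 ∪ S2, A.card ≤ α →
      F ((S1 ∪ S2) \ A) ≥
        max (max (1 - kf) (1 / ((α : ℝ) + 1))) (1 / ((N : ℝ) - (α : ℝ))) * c * fstar := by
  intro A hA hAc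
  have key : ∀ t : ℝ, 0 ≤ t → t * F S2 ≤ F ((S1 ∪ S2) \ A) →
      t * c * fstar ≤ F ((S1 ∪ S2) \ A) := by
    intro t ht h
    have := mul_le_mul_of_nonneg_left hS2 ht
    linarith
  have hS2c : (S2.card : ℝ) = (N : ℝ) - α := by
    rw [Finset.card_union_of_disjoint hdisj, hS1card] at hNcard
    rw [← hNcard]; push_cast; ring
  have hNα : (1 : ℝ) ≤ (N : ℝ) - α := by
    have : ((α + 1 : ℕ) : ℝ) ≤ N := by exact_mod_cast hαN
    push_cast at this; linarith
  have hα0 : (0 : ℝ) ≤ α := Nat.cast_nonneg α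
  have hnn : ∀ X, 0 ≤ F X := fun X => hF0 ▸ hFmono ∅ X (Finset.empty_subset _)
  have hcup : (S2 \ A) ∪ (S2 ∩ A) = S2 := Finset.sdiff_union_inter S2 A
  have hsub2 := rmop_sub_aux F hF0 hFmono hFsub (S2 \ A) (S2 ∩ A)
  rw [hcup] at hsub2
  have hsub3 := rmop_sub_aux F hF0 hFmono hFsub ∅ S2
  rw [Finset.empty_union, hF0] at hsub3
  have hcurv2 := rmop_curv_aux F hFsub kf hcurv (S2 \ A) (S1 \ A)
    ((hdisj.symm.mono_left Finset.sdiff_subset).mono_right Finset.sdiff_subset)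
  have hSA : (S2 \ A) ∪ (S1 \ A) = (S1 ∪ S2) \ A := by
    rw [Finset.union_sdiff_distrib, Finset.union_comm]
  rw [hSA] at hcurv2
  have hm : F (S2 \ A) ≤ F ((S1 ∪ S2) \ A) := by
    rw [← hSA]; exact hFmono _ _ Finset.subset_union_left
  have hcard : (S2 ∩ A).card ≤ (S1 \ A).card := by
    have h1 : (S1 ∩ A).card + (S2 ∩ A).card = A.card := by
      rw [← Finset.card_union_of_disjoint
        ((hdisj.mono_left Finset.inter_subset_left).mono_right Finset.inter_subset_left),
        ← Finset.union_inter_distrib_right, Finset.inter_eq_right.mpr hA]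
    have h2 := Finset.card_sdiff_add_card_inter S1 A
    omega
  have main : (1 - kf) * F S2 ≤ F ((S1 ∪ S2) \ A) ∧
      F S2 ≤ (α + 1) * F ((S1 ∪ S2) \ A) ∧ F S2 ≤ (N - α) * F ((S1 ∪ S2) \ A) := by
    have hG := hnn ((S1 ∪ S2) \ A)
    rcases (S2 ∩ A).eq_empty_or_nonempty with he | hne
    · rw [he, Finset.sum_empty, add_zero] at hsub2
      have h2 := hnn S2
      refine ⟨by nlinarith, by nlinarith, by nlinarith⟩
    · obtain ⟨b, hb, hbmax⟩ := Finset.exists_max_image (S2 ∩ A) (fun x => F {x}) hne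
      obtain ⟨a, ha⟩ : (S1 \ A).Nonempty := by
        rw [← Finset.card_pos]; have := hne.card_pos; omega
      have haS1 := (Finset.mem_sdiff.mp ha).1
      have hFa : F {a} ≤ F ((S1 ∪ S2) \ A) := by
        apply hFmono
        rw [Finset.singleton_subset_iff, ← hSA]
        exact Finset.mem_union_right _ ha
      have s1 : ∑ y ∈ S2 ∩ A, F {y} ≤ (S2 ∩ A).card * F {b} := by
        rw [← nsmul_eq_mul]; exact Finset.sum_le_card_nsmul _ _ _ hbmax
      have s2 : (S1 \ A).card * F {b} ≤ ∑ y ∈ S1 \ A, F {y} := by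
        rw [← nsmul_eq_mul]
        exact Finset.card_nsmul_le_sum _ _ _ (fun x hx =>
          hord x (Finset.mem_sdiff.mp hx).1 b (Finset.mem_inter.mp hb).1)
      have s3 : ((S2 ∩ A).card : ℝ) * F {b} ≤ (S1 \ A).card * F {b} :=
        mul_le_mul_of_nonneg_right (by exact_mod_cast hcard) (hnn _)
      have s4 : ∑ y ∈ S2, F {y} ≤ S2.card * F ((S1 ∪ S2) \ A) := by
        rw [← nsmul_eq_mul]
        exact Finset.sum_le_card_nsmul _ _ _ (fun x hx => (hord a haS1 x hx).trans hFa)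
      have s5 : ((S2 ∩ A).card : ℝ) * F {b} ≤ α * F ((S1 ∪ S2) \ A) := by
        apply mul_le_mul _ ((hord a haS1 b (Finset.mem_inter.mp hb).1).trans hFa) (hnn _) hα0
        exact_mod_cast (Finset.card_le_card Finset.inter_subset_right).trans hAc
      refine ⟨?_, by linarith, by rw [← hS2c]; linarith⟩
      have h1 : (1 - kf) * F S2 ≤ (1 - kf) * (F (S2 \ A) + ∑ y ∈ S1 \ A, F {y}) :=
        mul_le_mul_of_nonneg_left (by linarith) (by linarith)
      have h2 := mul_nonneg hkf0 (hnn (S2 \ A))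
      linarith
  obtain ⟨m1, m2, m3⟩ := main
  have k1 := key (1 - kf) (by linarith) m1
  have k2 := key (1 / ((α : ℝ) + 1)) (by positivity) (by
    rw [one_div, inv_mul_le_iff₀ (by positivity)]; exact m2)
  have k3 := key (1 / ((N : ℝ) - α)) (by apply one_div_nonneg.mpr; linarith) (by
    rw [one_div, inv_mul_le_iff₀ (by linarith)]; exact m3)
  rcases max_choice (max (1 - kf) (1 / ((α : ℝ) + 1))) (1 / ((N : ℝ) - (α : ℝ))) with h | h
  · rw [h]
    rcases max_choice (1 - kf) (1 / ((α : ℝ) + 1)) with h | h <;> rw [h] <;> assumption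
  · rw [h]; exact k3
end

section
/- Let P be a finite set and F : 2^P → ℝ normalized, monotone and submodular with curvature bound k_f ∈ [0,1) (F(P) − F(P \ {p}) ≥ (1 − k_f)·F({p}) for all p ∈ P). Let α ≥ 1, let S_1, S_2 ⊆ P be disjoint with |S_1| = α, and suppose F({a}) ≥ F({b}) for every a ∈ S_1 and b ∈ S_2. Then for every A ⊆ S_1 ∪ S_2 with |A| ≤ α, F((S_1 ∪ S_2) \ A) ≥ (1 − k_f)·F(S_2). -/
/-- After any removal of at most `α` paths, the remaining reward is at
least `(1 - k_f) · F(S_2)`. -/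
theorem remaining_reward_curvature_bound
    {P : Type*} [Fintype P] [DecidableEq P]
    (F : Finset P → ℝ)
    (hF0 : F ∅ = 0)
    (hFmono : ∀ A B : Finset P, A ⊆ B → F A ≤ F B)
    (hFsub : ∀ A B : Finset P, F A + F B ≥ F (A ∪ B) + F (A ∩ B))
    (kf : ℝ) (hkf0 : 0 ≤ kf) (hkf1 : kf < 1)
    (hcurv : ∀ p : P, F Finset.univ - F (Finset.univ \ {p}) ≥ (1 - kf) * F {p})
    (α : ℕ) (hα : 1 ≤ α)
    (S1 S2 : Finset P) (hdisj : Disjoint S1 S2) (hS1card : S1.card = α)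
    (hord : ∀ a ∈ S1, ∀ b ∈ S2, F {a} ≥ F {b}) :
    ∀ A ⊆ S1 ∪ S2, A.card ≤ α → F ((S1 ∪ S2) \ A) ≥ (1 - kf) * F S2 := by
  intro A hA hAc
  have hnn : ∀ T : Finset P, 0 ≤ F T := fun T => by
    have := hFmono ∅ T (Finset.empty_subset T)
    linarith
  have hk : 0 ≤ 1 - kf := by linarith
  have low : ∀ T : Finset P, (1 - kf) * ∑ p ∈ T, F {p} ≤ F T := by
    intro T
    induction T using Finset.induction_on with
    | empty => simp [hF0]
    | insert p T hp ih =>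
      rw [Finset.sum_insert hp]
      have h := hFsub (insert p T) (Finset.univ \ {p})
      have h1 : insert p T ∪ (Finset.univ \ {p}) = Finset.univ := by
        ext x; by_cases hx : x = p <;> simp [hx]
      have h2 : insert p T ∩ (Finset.univ \ {p}) = T := by
        ext x; by_cases hx : x = p <;> simp [hx, hp]
      rw [h1, h2] at h
      have := hcurv p
      linarith
  have up : ∀ T : Finset P, F T ≤ ∑ p ∈ T, F {p} := by
    intro T
    induction T using Finset.induction_on with
    | empty => simp [hF0]
    | insert p T hp ih =>
      rw [Finset.sum_insert hp]
      have h := hFsub {p} T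
      rw [← Finset.insert_eq] at h
      have := hnn ({p} ∩ T)
      linarith
  have hcard : (S2 ∩ A).card ≤ (S1 \ A).card := by
    have h1 : (S1 \ A).card + (S1 ∩ A).card = S1.card := Finset.card_sdiff_add_card_inter S1 A
    have h2 : (S1 ∩ A).card + (S2 ∩ A).card ≤ A.card := by
      rw [← Finset.card_union_of_disjoint (hdisj.mono Finset.inter_subset_left Finset.inter_subset_left)]
      exact Finset.card_le_card (Finset.union_subset Finset.inter_subset_right Finset.inter_subset_right)
    omega
  have hswap : ∑ p ∈ S2 ∩ A, F {p} ≤ ∑ p ∈ S1 \ A, F {p} := by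
    rcases (S2 ∩ A).eq_empty_or_nonempty with he | hne
    · rw [he, Finset.sum_empty]
      exact Finset.sum_nonneg fun p _ => hnn _
    · obtain ⟨b, hb, hmax⟩ := Finset.exists_max_image (S2 ∩ A) (fun p => F {p}) hne
      calc ∑ p ∈ S2 ∩ A, F {p} ≤ (S2 ∩ A).card • F {b} := Finset.sum_le_card_nsmul _ _ _ hmax
        _ ≤ (S1 \ A).card • F {b} := nsmul_le_nsmul_left (hnn _) hcard
        _ ≤ ∑ p ∈ S1 \ A, F {p} := Finset.card_nsmul_le_sum _ _ _ fun a ha =>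
            hord a (Finset.mem_sdiff.1 ha).1 b (Finset.mem_inter.1 hb).1
  have hsplit : ∑ p ∈ (S1 ∪ S2) \ A, F {p} = ∑ p ∈ S1 \ A, F {p} + ∑ p ∈ S2 \ A, F {p} := by
    rw [Finset.union_sdiff_distrib, Finset.sum_union
      (hdisj.mono Finset.sdiff_subset Finset.sdiff_subset)]
  have hS2 : ∑ p ∈ S2 ∩ A, F {p} + ∑ p ∈ S2 \ A, F {p} = ∑ p ∈ S2, F {p} :=
    Finset.sum_inter_add_sum_sdiff S2 A _
  have hfin : F S2 ≤ ∑ p ∈ (S1 ∪ S2) \ A, F {p} := by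
    have := up S2
    linarith
  exact (mul_le_mul_of_nonneg_left hfin hk).trans (low _)
end

section
/- Let P be a finite set and F : 2^P → ℝ normalized, monotone and submodular. Let α ≥ 1, let S_1, S_2 ⊆ P be disjoint with |S_1| = α, and suppose F({a}) ≥ F({b}) for every a ∈ S_1 and b ∈ S_2. Then for every A ⊆ S_1 ∪ S_2 with |A| ≤ α, F((S_1 ∪ S_2) \ A) ≥ F(S_2)/(α + 1). -/
/-- After any removal of at most `α` paths, the remaining reward is at
least `F(S_2) / (α + 1)`. -/
theorem remaining_reward_alpha_plus_one_bound
    {P : Type*} [Fintype P] [DecidableEq P]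
    (F : Finset P → ℝ)
    (hF0 : F ∅ = 0)
    (hFmono : ∀ A B : Finset P, A ⊆ B → F A ≤ F B)
    (hFsub : ∀ A B : Finset P, F A + F B ≥ F (A ∪ B) + F (A ∩ B))
    (α : ℕ) (hα : 1 ≤ α)
    (S1 S2 : Finset P) (hdisj : Disjoint S1 S2) (hS1card : S1.card = α)
    (hord : ∀ a ∈ S1, ∀ b ∈ S2, F {a} ≥ F {b}) :
    ∀ A ⊆ S1 ∪ S2, A.card ≤ α → F ((S1 ∪ S2) \ A) ≥ F S2 / ((α : ℝ) + 1) := by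
  intro A hA hAc
  have hsum : ∀ (c : ℝ) (T : Finset P), (∀ b ∈ T, F {b} ≤ c) → F T ≤ T.card * c := by
    intro c T
    induction T using Finset.induction_on with
    | empty => intro _; simp [hF0]
    | insert x T hx ih =>
      intro h
      have h1 := ih (fun b hb => h b (Finset.mem_insert_of_mem hb))
      have h2 := h x (Finset.mem_insert_self x T)
      have h3 := hFsub {x} T
      have h4 := hFmono ∅ ({x} ∩ T) (Finset.empty_subset _)
      rw [← Finset.insert_eq] at h3
      rw [Finset.card_insert_of_notMem hx]
      push_cast
      linarith
  have hpos : (0 : ℝ) < (α : ℝ) + 1 := by positivity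
  have hR0 : 0 ≤ F ((S1 ∪ S2) \ A) := hF0 ▸ hFmono ∅ _ (Finset.empty_subset _)
  have hα0 : (0 : ℝ) ≤ α := Nat.cast_nonneg α
  rw [ge_iff_le, div_le_iff₀ hpos]
  by_cases hS : S1 ⊆ A
  · have hEq : S1 = A := Finset.eq_of_subset_of_card_le hS (by omega)
    have h1 : F S2 ≤ F ((S1 ∪ S2) \ A) := by
      apply hFmono
      intro b hb
      have : b ∉ S1 := Finset.disjoint_right.mp hdisj hb
      simp [← hEq, hb, this]
    nlinarith [mul_nonneg hR0 hα0]
  · obtain ⟨a, ha, haA⟩ := Finset.not_subset.mp hS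
    have h1 : F {a} ≤ F ((S1 ∪ S2) \ A) := by
      apply hFmono
      simp [ha, haA]
    have h2 : F (S2 \ A) ≤ F ((S1 ∪ S2) \ A) :=
      hFmono _ _ (Finset.sdiff_subset_sdiff Finset.subset_union_right (Finset.Subset.refl A))
    have h3 := hsum (F ((S1 ∪ S2) \ A)) (S2 ∩ A)
      (fun b hb => (hord a ha b (Finset.mem_inter.mp hb).1).trans h1)
    have h4 : ((S2 ∩ A).card : ℝ) ≤ α := by
      exact_mod_cast (Finset.card_le_card Finset.inter_subset_right).trans hAc
    have h5 := hFsub (S2 \ A) (S2 ∩ A)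
    have h6 := hFmono ∅ ((S2 \ A) ∩ (S2 ∩ A)) (Finset.empty_subset _)
    rw [Finset.sdiff_union_inter] at h5
    have h7 := mul_le_mul_of_nonneg_right h4 hR0
    linarith
end

section
/- Let P be a finite set and F : 2^P → ℝ normalized, monotone and submodular. Let S_1, S_2 ⊆ P be disjoint with |S_1| = α ≥ 1 and |S_1 ∪ S_2| = N > α, and suppose F({a}) ≥ F({b}) for every a ∈ S_1 and b ∈ S_2. Then for every A ⊆ S_1 ∪ S_2 with |A| ≤ α, F((S_1 ∪ S_2) \ A) ≥ F(S_2)/(N − α). -/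
/-- After any removal of at most `α` paths, the remaining reward is at
least `F(S_2) / (N - α)`. -/
theorem remaining_reward_N_minus_alpha_bound
    {P : Type*} [Fintype P] [DecidableEq P]
    (F : Finset P → ℝ)
    (hF0 : F ∅ = 0)
    (hFmono : ∀ A B : Finset P, A ⊆ B → F A ≤ F B)
    (hFsub : ∀ A B : Finset P, F A + F B ≥ F (A ∪ B) + F (A ∩ B))
    (α N : ℕ) (hα : 1 ≤ α) (hαN : α < N)
    (S1 S2 : Finset P) (hdisj : Disjoint S1 S2)
    (hS1card : S1.card = α) (hNcard : (S1 ∪ S2).card = N)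
    (hord : ∀ a ∈ S1, ∀ b ∈ S2, F {a} ≥ F {b}) :
    ∀ A ⊆ S1 ∪ S2, A.card ≤ α →
      F ((S1 ∪ S2) \ A) ≥ F S2 / ((N : ℝ) - (α : ℝ)) := by
  intro A hA hAc
  have hcard : (S2.card : ℝ) = (N : ℝ) - (α : ℝ) := by
    have h := Finset.card_union_of_disjoint hdisj
    have h2 : N = α + S2.card := by omega
    rw [h2]; push_cast; ring
  have hm1 : (1 : ℝ) ≤ (N : ℝ) - (α : ℝ) := by
    have h : ((α + 1 : ℕ) : ℝ) ≤ (N : ℝ) := by exact_mod_cast hαN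
    push_cast at h
    linarith
  have hnn : ∀ B : Finset P, 0 ≤ F B := by
    intro B
    have h := hFmono ∅ B (Finset.empty_subset B)
    linarith
  have hsum : ∀ B : Finset P, F B ≤ ∑ b ∈ B, F {b} := by
    intro B
    induction B using Finset.induction_on with
    | empty => simp [hF0]
    | insert x B hx ih =>
      rw [Finset.sum_insert hx]
      have h := hFsub {x} B
      rw [← Finset.insert_eq] at h
      have h2 := hnn ({x} ∩ B)
      linarith
  rw [ge_iff_le, div_le_iff₀ (by linarith)]
  by_cases hex : S1 ⊆ A
  · have hAe : S1 = A := Finset.eq_of_subset_of_card_le hex (by omega)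
    have h1 : S2 ⊆ (S1 ∪ S2) \ A := by
      intro x hx
      rw [Finset.mem_sdiff, ← hAe]
      exact ⟨Finset.mem_union_right _ hx, fun h => Finset.disjoint_left.mp hdisj h hx⟩
    have h2 := hFmono _ _ h1
    nlinarith [hnn ((S1 ∪ S2) \ A)]
  · obtain ⟨a, ha, haA⟩ := Finset.not_subset.mp hex
    have h1 : F {a} ≤ F ((S1 ∪ S2) \ A) := by
      apply hFmono
      rw [Finset.singleton_subset_iff, Finset.mem_sdiff]
      exact ⟨Finset.mem_union_left _ ha, haA⟩
    have h2 : ∑ b ∈ S2, F {b} ≤ S2.card • F {a} :=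
      Finset.sum_le_card_nsmul _ _ _ (fun b hb => hord a ha b hb)
    rw [nsmul_eq_mul, hcard] at h2
    nlinarith [hsum S2]
end

section
/- Let V be a finite set and f : 2^V → ℝ normalized, monotone and submodular, and let k_f ∈ [0,1) be a curvature bound for f (f(V) − f(V \ {v}) ≥ (1 − k_f)·f({v}) for every v ∈ V). Then for every A ⊆ V, f(A) ≥ (1 − k_f) · Σ_{a ∈ A} f({a}). -/
/-- For a normalized monotone submodular `f` with curvature bound
`k_f ∈ [0,1)`, every set satisfies `f(A) ≥ (1 - k_f) · Σ_{a ∈ A} f({a})`. -/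
theorem curvature_sum_lower_bound
    {V : Type*} [Fintype V] [DecidableEq V]
    (f : Finset V → ℝ)
    (hf0 : f ∅ = 0)
    (hfmono : ∀ A B : Finset V, A ⊆ B → f A ≤ f B)
    (hfsub : ∀ A B : Finset V, f A + f B ≥ f (A ∪ B) + f (A ∩ B))
    (kf : ℝ) (hkf0 : 0 ≤ kf) (hkf1 : kf < 1)
    (hcurv : ∀ v : V, f Finset.univ - f (Finset.univ \ {v}) ≥ (1 - kf) * f {v}) :
    ∀ A : Finset V, f A ≥ (1 - kf) * ∑ a ∈ A, f {a} := by
  intro A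
  induction A using Finset.induction_on with
  | empty => simp [hf0]
  | insert a s ha ih =>
    rw [Finset.sum_insert ha, mul_add]
    have h := hfsub (insert a s) (Finset.univ \ {a})
    have h1 : insert a s ∪ (Finset.univ \ {a}) = Finset.univ := by
      ext x
      by_cases hx : x = a <;> simp [hx]
    have h2 : insert a s ∩ (Finset.univ \ {a}) = s := by
      ext x
      by_cases hx : x = a
      · subst hx; simp [ha]
      · simp [hx]
    rw [h1, h2] at h
    linarith [hcurv a]
end

section
/- Let V be a finite set and f : 2^V → ℝ normalized, monotone and submodular. Let Y, P ⊆ V be nonempty sets such that f({y}) ≥ f({p}) for every y ∈ Y and p ∈ P. Then f(Y ∪ P) − f(Y) ≤ |P| · f(Y). -/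
/-- If every singleton of `Y` has reward at least that of every singleton
of `T`, then the marginal gain of `T` over `Y` is at most `|T| · f(Y)`. -/
theorem marginal_gain_card_bound
    {V : Type*} [Fintype V] [DecidableEq V]
    (f : Finset V → ℝ)
    (hf0 : f ∅ = 0)
    (hfmono : ∀ A B : Finset V, A ⊆ B → f A ≤ f B)
    (hfsub : ∀ A B : Finset V, f A + f B ≥ f (A ∪ B) + f (A ∩ B))
    (Y T : Finset V) (hY : Y.Nonempty) (hT : T.Nonempty)
    (hord : ∀ y ∈ Y, ∀ p ∈ T, f {y} ≥ f {p}) :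
    f (Y ∪ T) - f Y ≤ (T.card : ℝ) * f Y := by
  obtain ⟨y, hy⟩ := hY
  have key : ∀ S : Finset V, S ⊆ T → f (Y ∪ S) - f Y ≤ (S.card : ℝ) * f Y := by
    intro S
    induction S using Finset.induction_on with
    | empty => intro _; simp
    | insert a S ha ih =>
      intro hS
      have h1 := ih (fun x hx => hS (Finset.mem_insert_of_mem hx))
      have h2 := hord y hy a (hS (Finset.mem_insert_self a S))
      have h3 := hfmono {y} Y (Finset.singleton_subset_iff.mpr hy)
      have h4 := hfsub (Y ∪ S) {a}
      have h5 := hfmono ∅ ((Y ∪ S) ∩ {a}) (Finset.empty_subset _)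
      have h6 : Y ∪ insert a S = (Y ∪ S) ∪ {a} := by
        ext x
        simp only [Finset.mem_union, Finset.mem_insert, Finset.mem_singleton]
        tauto
      rw [h6, Finset.card_insert_of_notMem ha]
      push_cast
      linarith
  exact key T (Finset.Subset.refl T)
end

section
/- Let V be a finite set and f : 2^V → ℝ normalized, monotone and submodular with curvature bound k_f ∈ [0,1] (f(V) − f(V \ {v}) ≥ (1 − k_f)·f({v}) for every v ∈ V). Then for all Y, Z ⊆ V, f(Z ∪ Y) − f(Z) + Σ_{j ∈ Y ∩ Z} ( f(Z ∪ Y) − f((Z ∪ Y) \ {j}) ) ≥ (1 − k_f) · f(Y). -/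
/-- Curvature inequality
`f(Z∪Y) - f(Z) + Σ_{j ∈ Y∩Z} (f(Z∪Y) - f((Z∪Y)\{j})) ≥ (1 - k_f)·f(Y)`. -/
theorem curvature_union_inequality
    {V : Type*} [Fintype V] [DecidableEq V]
    (f : Finset V → ℝ)
    (hf0 : f ∅ = 0)
    (hfmono : ∀ A B : Finset V, A ⊆ B → f A ≤ f B)
    (hfsub : ∀ A B : Finset V, f A + f B ≥ f (A ∪ B) + f (A ∩ B))
    (kf : ℝ) (hkf0 : 0 ≤ kf) (hkf1 : kf ≤ 1)
    (hcurv : ∀ v : V, f Finset.univ - f (Finset.univ \ {v}) ≥ (1 - kf) * f {v}) :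
    ∀ Y Z : Finset V,
      f (Z ∪ Y) - f Z + ∑ j ∈ Y ∩ Z, (f (Z ∪ Y) - f ((Z ∪ Y) \ {j})) ≥
        (1 - kf) * f Y := by
  have h1 : ∀ (S : Finset V) (v : V), v ∈ S → f S - f (S \ {v}) ≥ (1 - kf) * f {v} := by
    intro S v hv
    have h := hfsub S (Finset.univ \ {v})
    have e1 : S ∪ (Finset.univ \ {v}) = Finset.univ := by
      ext x
      by_cases hx : x = v <;> simp [hx, hv]
    have e2 : S ∩ (Finset.univ \ {v}) = S \ {v} := by
      ext x
      simp
    rw [e1, e2] at h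
    linarith [hcurv v]
  have h2 : ∀ Z T : Finset V, Disjoint T Z →
      f (Z ∪ T) - f Z ≥ ∑ j ∈ T, (1 - kf) * f {j} := by
    intro Z T
    induction T using Finset.induction_on with
    | empty => simp
    | insert a T ha ih =>
      intro hd
      rw [Finset.disjoint_insert_left] at hd
      have h := ih hd.2
      have h' := h1 (Z ∪ insert a T) a (by simp)
      have e : (Z ∪ insert a T) \ {a} = Z ∪ T := by
        ext x
        by_cases hx : x = a
        · subst hx
          simp [ha, hd.1]
        · simp [hx]
      rw [e] at h'
      rw [Finset.sum_insert ha]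
      linarith
  have h3 : ∀ T : Finset V, f T ≤ ∑ j ∈ T, f {j} := by
    intro T
    induction T using Finset.induction_on with
    | empty => simp [hf0]
    | insert a T ha ih =>
      have h := hfsub {a} T
      have h0 := hfmono ∅ ({a} ∩ T) (by simp)
      rw [← Finset.insert_eq] at h
      rw [Finset.sum_insert ha]
      linarith
  intro Y Z
  have a1 := h2 Z (Y \ Z) Finset.sdiff_disjoint
  rw [Finset.union_sdiff_self_eq_union] at a1
  have a2 : ∑ j ∈ Y ∩ Z, (1 - kf) * f {j} ≤
      ∑ j ∈ Y ∩ Z, (f (Z ∪ Y) - f ((Z ∪ Y) \ {j})) := by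
    apply Finset.sum_le_sum
    intro j hj
    exact h1 _ _ (Finset.mem_union_left _ (Finset.mem_inter.1 hj).2)
  have a3 := Finset.sum_inter_add_sum_sdiff Y Z (fun j => (1 - kf) * f {j})
  have a4 := mul_le_mul_of_nonneg_left (h3 Y) (sub_nonneg.2 hkf1)
  rw [Finset.mul_sum] at a4
  linarith
end

section
/- Let V be a finite set and f : 2^V → ℝ normalized, monotone and submodular with curvature bound k_f ∈ [0,1] (f(V) − f(V \ {v}) ≥ (1 − k_f)·f({v}) for every v ∈ V). Then for all disjoint Y, Z ⊆ V, f(Z ∪ Y) − f(Z) ≥ (1 − k_f) · f(Y). -/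
/-- For disjoint `Y`, `Z`, the marginal gain satisfies
`f(Z ∪ Y) - f(Z) ≥ (1 - k_f)·f(Y)`. -/
theorem disjoint_marginal_gain_curvature
    {V : Type*} [Fintype V] [DecidableEq V]
    (f : Finset V → ℝ)
    (hf0 : f ∅ = 0)
    (hfmono : ∀ A B : Finset V, A ⊆ B → f A ≤ f B)
    (hfsub : ∀ A B : Finset V, f A + f B ≥ f (A ∪ B) + f (A ∩ B))
    (kf : ℝ) (hkf0 : 0 ≤ kf) (hkf1 : kf ≤ 1)
    (hcurv : ∀ v : V, f Finset.univ - f (Finset.univ \ {v}) ≥ (1 - kf) * f {v}) :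
    ∀ Y Z : Finset V, Disjoint Y Z → f (Z ∪ Y) - f Z ≥ (1 - kf) * f Y := by
  intro Y
  induction Y using Finset.induction_on with
  | empty => intro Z _; simp [hf0]
  | insert a s ha ih =>
    intro Z hd
    rw [Finset.disjoint_insert_left] at hd
    obtain ⟨haZ, hd⟩ := hd
    have h1 := ih Z hd
    have h2 := hcurv a
    have h3 := hfsub (Z ∪ insert a s) (Finset.univ \ {a})
    have e1 : (Z ∪ insert a s) ∪ (Finset.univ \ {a}) = Finset.univ := by
      ext x
      by_cases hx : x = a <;> simp [hx]
    have e2 : (Z ∪ insert a s) ∩ (Finset.univ \ {a}) = Z ∪ s := by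
      ext x
      by_cases hx : x = a
      · subst hx; simp [ha, haZ]
      · simp [hx]
    rw [e1, e2] at h3
    have h4 := hfsub {a} s
    have e3 : ({a} : Finset V) ∩ s = ∅ := by simp [ha]
    have e4 : ({a} : Finset V) ∪ s = insert a s := rfl
    rw [e3, e4, hf0] at h4
    have h5 : (1 - kf) * f (insert a s) ≤ (1 - kf) * (f {a} + f s) :=
      mul_le_mul_of_nonneg_left (by linarith) (by linarith)
    linarith
end

section
/- Let V be a finite set and g : 2^V → ℝ normalized, monotone and submodular with curvature bound k_g ∈ [0,1] (g(V) − g(V \ {v}) ≥ (1 − k_g)·g({v}) for every v ∈ V). Then for any pairwise disjoint sets Δ_1, …, Δ_M ⊆ V, g(Δ_1 ∪ ⋯ ∪ Δ_M) ≥ (1 − k_g) · Σ_{i=1}^{M} g(Δ_i). -/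
/-- For pairwise disjoint sets `Δ_1, …, Δ_M`,
`g(Δ_1 ∪ ⋯ ∪ Δ_M) ≥ (1 - k_g) · Σ_i g(Δ_i)`. -/
theorem disjoint_union_curvature_sum
    {V : Type*} [Fintype V] [DecidableEq V]
    (g : Finset V → ℝ)
    (hg0 : g ∅ = 0)
    (hgmono : ∀ A B : Finset V, A ⊆ B → g A ≤ g B)
    (hgsub : ∀ A B : Finset V, g A + g B ≥ g (A ∪ B) + g (A ∩ B))
    (kg : ℝ) (hkg0 : 0 ≤ kg) (hkg1 : kg ≤ 1)
    (hcurv : ∀ v : V, g Finset.univ - g (Finset.univ \ {v}) ≥ (1 - kg) * g {v})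
    (M : ℕ) (Δ : Fin M → Finset V)
    (hdisj : ∀ i j : Fin M, i ≠ j → Disjoint (Δ i) (Δ j)) :
    g (Finset.univ.biUnion Δ) ≥ (1 - kg) * ∑ i : Fin M, g (Δ i) := by
  have lower : ∀ S : Finset V, (1 - kg) * ∑ v ∈ S, g {v} ≤ g S := by
    intro S
    induction S using Finset.induction_on with
    | empty => simp [hg0]
    | insert a S ha ih =>
      have h1 := hgsub (insert a S) (Finset.univ \ {a})
      have e1 : insert a S ∪ (Finset.univ \ {a}) = Finset.univ := by
        ext x; by_cases h : x = a <;> simp [h]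
      have e2 : insert a S ∩ (Finset.univ \ {a}) = S := by
        ext x; by_cases h : x = a <;> simp [h, ha]
      rw [e1, e2] at h1
      have h2 := hcurv a
      rw [Finset.sum_insert ha, mul_add]
      linarith
  have upper : ∀ S : Finset V, g S ≤ ∑ v ∈ S, g {v} := by
    intro S
    induction S using Finset.induction_on with
    | empty => simp [hg0]
    | insert a S ha ih =>
      have h1 := hgsub {a} S
      have e2 : {a} ∩ S = ∅ := by
        ext x; by_cases h : x = a <;> simp [h, ha]
      rw [e2, hg0, ← Finset.insert_eq] at h1
      rw [Finset.sum_insert ha]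
      linarith
  have h := lower (Finset.univ.biUnion Δ)
  rw [Finset.sum_biUnion (fun i _ j _ hij => hdisj i j hij)] at h
  refine le_trans (mul_le_mul_of_nonneg_left ?_ (by linarith)) h
  exact Finset.sum_le_sum fun i _ => upper (Δ i)
end

section
/- Let P be a finite set and F : 2^P → ℝ normalized, monotone and submodular. Let α ≥ 1, let S_1, S_2 ⊆ P be disjoint, let A ⊆ S_1 ∪ S_2, and write S = S_1 ∪ S_2, S_2* = A ∩ S_2. Suppose S_1 \ A ≠ ∅, |S_2*| ≤ α, and F({a}) ≥ F({b}) for every a ∈ S_1 \ A and b ∈ S_2*. Then F(S_1 \ A) ≥ (1/α) · ( F((S \ A) ∪ S_2*) − F(S \ A) ). -/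
/-- Bound on the remaining reward of `S_1` after an attack `A`, in terms
of the marginal contribution of the removed part `S_2* = A ∩ S_2` of `S_2`. -/
theorem surviving_S1_marginal_bound
    {P : Type*} [Fintype P] [DecidableEq P]
    (F : Finset P → ℝ)
    (hF0 : F ∅ = 0)
    (hFmono : ∀ A B : Finset P, A ⊆ B → F A ≤ F B)
    (hFsub : ∀ A B : Finset P, F A + F B ≥ F (A ∪ B) + F (A ∩ B))
    (α : ℕ) (hα : 1 ≤ α)
    (S1 S2 A : Finset P) (hdisj : Disjoint S1 S2)
    (hA : A ⊆ S1 ∪ S2)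
    (hS1A : (S1 \ A).Nonempty)
    (hcard : (A ∩ S2).card ≤ α)
    (hord : ∀ a ∈ S1 \ A, ∀ b ∈ A ∩ S2, F {a} ≥ F {b}) :
    F (S1 \ A) ≥ (1 / (α : ℝ)) *
      (F (((S1 ∪ S2) \ A) ∪ (A ∩ S2)) - F ((S1 ∪ S2) \ A)) := by
  obtain ⟨a, ha⟩ := hS1A
  have hnn : ∀ T : Finset P, 0 ≤ F T := fun T => by
    rw [← hF0]; exact hFmono _ _ (Finset.empty_subset T)
  have key : ∀ (U T : Finset P), (∀ b ∈ T, F {b} ≤ F {a}) →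
      F (U ∪ T) - F U ≤ (T.card : ℝ) * F {a} := by
    intro U T
    induction T using Finset.induction_on with
    | empty => intro _; simp
    | insert b T hb ih =>
      intro h
      have h1 := ih (fun c hc => h c (Finset.mem_insert_of_mem hc))
      have h2 := h b (Finset.mem_insert_self b T)
      have h3 := hFsub (U ∪ T) {b}
      have h4 := hnn ((U ∪ T) ∩ {b})
      have h5 : U ∪ insert b T = (U ∪ T) ∪ {b} := by
        ext x
        simp only [Finset.mem_union, Finset.mem_insert, Finset.mem_singleton]
        tauto
      rw [h5, Finset.card_insert_of_notMem hb]
      push_cast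
      linarith
  have h1 := key ((S1 ∪ S2) \ A) (A ∩ S2) (fun b hb => hord a ha b hb)
  have h2 : F {a} ≤ F (S1 \ A) := hFmono _ _ (Finset.singleton_subset_iff.mpr ha)
  have hpos : (0 : ℝ) < α := by exact_mod_cast hα
  have hc : ((A ∩ S2).card : ℝ) ≤ α := by exact_mod_cast hcard
  have h3 : ((A ∩ S2).card : ℝ) * F {a} ≤ α * F (S1 \ A) :=
    mul_le_mul hc h2 (hnn _) hpos.le
  rw [ge_iff_le, one_div, inv_mul_le_iff₀ hpos]
  linarith
end

section
/- Let Π be a finite set, let b : Π → I be a map into a finite index set (the blocks of a partition matroid), and let α be a positive integer. Call a set S ⊆ Π independent if |S ∩ b^{−1}(i)| ≤ 1 for every i ∈ I. Let f : 2^Π → ℝ be any set function, let T ⊆ I with |T| ≤ α, and let S_1 ⊆ b^{−1}(T) be independent. Then max{ f(S_2) : S_2 ⊆ Π \ S_1 and S_1 ∪ S_2 is independent } ≥ max_{S independent} min{ f(S \ A) : A ⊆ S, |A| ≤ α }. In words: the best team reward attainable by the robots outside the blocks committed to S_1 is at least the optimal value of the robust (max–min) problem with up to α removals. -/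
/-- In a partition matroid, the best team reward attainable by the robots
outside the blocks committed to `S_1` is at least the optimal value of the robust
max–min problem with up to `α` removals. -/
theorem partition_matroid_maxmin_bound
    {G I : Type*} [Fintype G] [DecidableEq G] [Fintype I] [DecidableEq I]
    (b : G → I) (α : ℕ) (hα : 0 < α)
    (f : Finset G → ℝ)
    (T : Finset I) (hT : T.card ≤ α)
    (Indep : Finset G → Prop)
    (hIndep : ∀ S : Finset G, Indep S ↔ ∀ i : I, (S.filter (fun p => b p = i)).card ≤ 1)
    (S1 : Finset G) (hS1T : ∀ p ∈ S1, b p ∈ T) (hS1 : Indep S1) :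
    sSup {x : ℝ | ∃ S2 : Finset G, Disjoint S2 S1 ∧ Indep (S1 ∪ S2) ∧ x = f S2} ≥
      sSup {x : ℝ | ∃ S : Finset G, Indep S ∧
        x = sInf {y : ℝ | ∃ A ⊆ S, A.card ≤ α ∧ y = f (S \ A)}} := by
  have hinj : ∀ S : Finset G, Indep S ↔ ∀ p ∈ S, ∀ q ∈ S, b p = b q → p = q := by
    intro S
    rw [hIndep]
    constructor
    · intro h p hp q hq hpq
      exact Finset.card_le_one.1 (h (b q)) p (by simp [hp, hpq]) q (by simp [hq])
    · intro h i
      rw [Finset.card_le_one]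
      intro p hp q hq
      simp only [Finset.mem_filter] at hp hq
      exact h p hp.1 q hq.1 (hp.2.trans hq.2.symm)
  apply csSup_le
  · exact ⟨_, ∅, by rw [hinj]; simp, rfl⟩
  rintro x ⟨S, hS, rfl⟩
  have hSi := (hinj S).1 hS
  have hS1i := (hinj S1).1 hS1
  have hbelow : BddBelow {y : ℝ | ∃ A ⊆ S, A.card ≤ α ∧ y = f (S \ A)} := by
    apply ((Set.finite_range f).subset _).bddBelow
    rintro y ⟨A, -, -, rfl⟩
    exact ⟨_, rfl⟩
  have habove : BddAbove {x : ℝ | ∃ S2 : Finset G,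
      Disjoint S2 S1 ∧ Indep (S1 ∪ S2) ∧ x = f S2} := by
    apply ((Set.finite_range f).subset _).bddAbove
    rintro y ⟨A, -, -, rfl⟩
    exact ⟨_, rfl⟩
  have hmem : ∀ p ∈ S \ S.filter (fun p => b p ∈ T), p ∈ S ∧ b p ∉ T := by
    intro p hp
    simp only [Finset.mem_sdiff, Finset.mem_filter, not_and] at hp
    exact ⟨hp.1, hp.2 hp.1⟩
  refine (csInf_le hbelow ⟨S.filter (fun p => b p ∈ T), Finset.filter_subset _ _, ?_, rfl⟩).trans
    (le_csSup habove ⟨S \ S.filter (fun p => b p ∈ T), ?_, ?_, rfl⟩)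
  · refine (Finset.card_le_card_of_injOn b ?_ ?_).trans hT
    · intro p hp
      exact (Finset.mem_filter.1 hp).2
    · intro p hp q hq hpq
      exact hSi p (Finset.mem_filter.1 hp).1 q (Finset.mem_filter.1 hq).1 hpq
  · rw [Finset.disjoint_left]
    intro p hp hp1
    exact (hmem p hp).2 (hS1T p hp1)
  · rw [hinj]
    intro p hp q hq hpq
    rcases Finset.mem_union.1 hp with hp | hp <;> rcases Finset.mem_union.1 hq with hq | hq
    · exact hS1i p hp q hq hpq
    · exact absurd (hpq ▸ hS1T p hp) (hmem q hq).2
    · exact absurd (hpq ▸ hS1T q hq) (hmem p hp).2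
    · exact hSi p (hmem p hp).1 q (hmem q hq).1 hpq
end

section
/- Let V be a finite set and g : 2^V → ℝ normalized, monotone and submodular with curvature bound k_f ∈ [0,1] (g(V) − g(V \ {v}) ≥ (1 − k_f)·g({v}) for every v ∈ V). Then for all X, Q ⊆ V, writing Δ = X ∩ Q, g(X ∪ (Q \ Δ)) − g(X) ≥ (1 − k_f) · ( g(Q) − g(Δ) ). -/
/-- With `Δ = X ∩ Q`,
`g(X ∪ (Q \ Δ)) - g(X) ≥ (1 - k_f)·(g(Q) - g(Δ))`. -/
theorem sga_step_inequality
    {V : Type*} [Fintype V] [DecidableEq V]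
    (g : Finset V → ℝ)
    (hg0 : g ∅ = 0)
    (hgmono : ∀ A B : Finset V, A ⊆ B → g A ≤ g B)
    (hgsub : ∀ A B : Finset V, g A + g B ≥ g (A ∪ B) + g (A ∩ B))
    (kf : ℝ) (hkf0 : 0 ≤ kf) (hkf1 : kf ≤ 1)
    (hcurv : ∀ v : V, g Finset.univ - g (Finset.univ \ {v}) ≥ (1 - kf) * g {v}) :
    ∀ X Q : Finset V,
      g (X ∪ (Q \ (X ∩ Q))) - g X ≥ (1 - kf) * (g Q - g (X ∩ Q)) := by
  intro X Q
  have key : ∀ S : Finset V, Disjoint S X →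
      g (X ∪ S) - g X ≥ (1 - kf) * (g ((X ∩ Q) ∪ S) - g (X ∩ Q)) := by
    intro S
    induction S using Finset.induction_on with
    | empty => intro _; simp
    | insert v S hv ih =>
      intro hd
      rw [Finset.disjoint_insert_left] at hd
      have h1 := ih hd.2
      have h2 := hgsub (X ∪ insert v S) (Finset.univ \ {v})
      have e1 : (X ∪ insert v S) ∪ (Finset.univ \ {v}) = Finset.univ := by
        ext a; by_cases h : a = v <;> simp [h]
      have e2 : (X ∪ insert v S) ∩ (Finset.univ \ {v}) = X ∪ S := by
        ext a; by_cases h : a = v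
        · subst h; simp [hv, hd.1]
        · simp [h]
      rw [e1, e2] at h2
      have h3 := hgsub ((X ∩ Q) ∪ S) {v}
      have e3 : ((X ∩ Q) ∪ S) ∪ {v} = (X ∩ Q) ∪ insert v S := by
        ext a; simp
      have e4 : ((X ∩ Q) ∪ S) ∩ {v} = ∅ := by
        ext a; by_cases h : a = v
        · subst h; simp [hv, hd.1]
        · simp [h]
      rw [e3, e4, hg0] at h3
      have h4 := hcurv v
      have h5 : (1 - kf) * (g ((X ∩ Q) ∪ insert v S) - g ((X ∩ Q) ∪ S)) ≤ (1 - kf) * g {v} :=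
        mul_le_mul_of_nonneg_left (by linarith) (by linarith)
      linarith
  have h := key (Q \ (X ∩ Q)) (by
    rw [Finset.disjoint_left]; intro a; simp)
  have e : (X ∩ Q) ∪ (Q \ (X ∩ Q)) = Q := by
    ext a; simp; tauto
  rwa [e] at h
end
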